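/- arXiv:2502.02165 — 2 statements merged into one kernel-verified Lean document; each statement's English description precedes it below -/
import Mathlib

section
/- Let A be a real symmetric n×n matrix with nonnegative entries and all row sums positive, let D be the diagonal matrix with D_ii = Σ_j A_ij, and let Ā = D^{−1/2} A D^{−1/2}. Let E be a diagonal matrix with 0 ≤ E_ii < 1 for all i, and set E' := I − (I + E)^{−1/2}. Then the normalized version of A + DE (i.e., (D')^{−1/2}(A + DE)(D')^{−1/2} where D' is the diagonal matrix of row sums of A + DE) equals Ā − ĀE' − E'Ā + E'ĀE' + E − 2EE' + E'EE'. -/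
/-!
Write `S = D^{-1/2}`, `T = (I + E)^{-1/2}` and `Ā = S A S`. The row sums of `A + DE` are the
diagonal entries of `D (I + E)`, so its normalized version is `T S (A + DE) S T`. Diagonal matrices
commute and `S D S = I`, hence this is `T (Ā + E) T`, and it remains to substitute `T = I - E'`.
-/

/-- The normalized version `D⁻¹ᐟ² B D⁻¹ᐟ²` of a matrix `B`, where `D` is the diagonal
matrix of row sums of `B`. -/
noncomputable def normalized {n : ℕ} (B : Matrix (Fin n) (Fin n) ℝ) :
    Matrix (Fin n) (Fin n) ℝ :=
  Matrix.diagonal (fun i => (∑ j, B i j) ^ (-(1 : ℝ) / 2)) * B *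
    Matrix.diagonal (fun i => (∑ j, B i j) ^ (-(1 : ℝ) / 2))

open Matrix

variable {ι R M : Type*}

/-- The matrix `D^{-1/2}` for the diagonal matrix `D` with diagonal `d`. It is meaningful where
`d` is positive; elsewhere its entries are junk values of `Real.rpow`, with `0` at `d i = 0`. -/
noncomputable def invSqrtDiagonal [DecidableEq ι] (d : ι → ℝ) : Matrix ι ι ℝ :=
  diagonal fun i => d i ^ (-(1 : ℝ) / 2)

theorem commute_diagonal_invSqrtDiagonal [Fintype ι] [DecidableEq ι] (e d : ι → ℝ) :
    Commute (diagonal e) (invSqrtDiagonal d) :=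
  commute_diagonal _ _

theorem invSqrtDiagonal_mul [Fintype ι] [DecidableEq ι] {d e : ι → ℝ} (hd : ∀ i, 0 ≤ d i)
    (he : ∀ i, 0 ≤ e i) :
    invSqrtDiagonal (d * e) = invSqrtDiagonal d * invSqrtDiagonal e := by
  simp only [invSqrtDiagonal, diagonal_mul_diagonal, Pi.mul_apply, Real.mul_rpow (hd _) (he _)]

theorem invSqrtDiagonal_mul_diagonal_mul_invSqrtDiagonal [Fintype ι] [DecidableEq ι] {d : ι → ℝ}
    (hd : ∀ i, 0 < d i) :
    invSqrtDiagonal d * diagonal d * invSqrtDiagonal d = 1 := by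
  have entry_eq_one (i : ι) : d i ^ (-(1 : ℝ) / 2) * d i * d i ^ (-(1 : ℝ) / 2) = 1 := by
    rw [← Real.rpow_add_one (hd i).ne', ← Real.rpow_add (hd i)]
    norm_num
  simp only [invSqrtDiagonal, diagonal_mul_diagonal, entry_eq_one, diagonal_one]

theorem sum_add_diagonal_mul_diagonal_apply [Fintype ι] [DecidableEq ι] [NonAssocSemiring R]
    (A : Matrix ι ι R) (e : ι → R) (i : ι) :
    ∑ j, (A + diagonal (fun i => ∑ j, A i j) * diagonal e) i j = (∑ j, A i j) * (1 + e i) := by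
  simp [diagonal_apply, Finset.sum_add_distrib, mul_add]

theorem normalized_eq_invSqrtDiagonal_mul {n : ℕ} (B : Matrix (Fin n) (Fin n) ℝ) :
    normalized B =
      invSqrtDiagonal (fun i => ∑ j, B i j) * B * invSqrtDiagonal (fun i => ∑ j, B i j) :=
  rfl

theorem normalized_add_diagonal_mul_diagonal {n : ℕ} {A : Matrix (Fin n) (Fin n) ℝ}
    (hrow : ∀ i, 0 < ∑ j, A i j) {e : Fin n → ℝ} (he : ∀ i, -1 ≤ e i) :
    normalized (A + diagonal (fun i => ∑ j, A i j) * diagonal e) =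
      invSqrtDiagonal (1 + e) * (normalized A + diagonal e) * invSqrtDiagonal (1 + e) := by
  set d : Fin n → ℝ := fun i => ∑ j, A i j
  set S := invSqrtDiagonal d
  set T := invSqrtDiagonal (1 + e)
  have rowSum_eq : (fun i => ∑ j, (A + diagonal d * diagonal e) i j) = d * (1 + e) :=
    funext (sum_add_diagonal_mul_diagonal_apply A e)
  have invSqrt_eq : invSqrtDiagonal (d * (1 + e)) = S * T :=
    invSqrtDiagonal_mul (fun i => (hrow i).le) fun i => neg_le_iff_add_nonneg'.mp (he i)
  have S_mul_T : S * T = T * S := commute_diagonal_invSqrtDiagonal _ _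
  have E_mul_S : diagonal e * S = S * diagonal e := commute_diagonal_invSqrtDiagonal _ _
  have S_mul_D_mul_S : S * diagonal d * S = 1 :=
    invSqrtDiagonal_mul_diagonal_mul_invSqrtDiagonal hrow
  calc normalized (A + diagonal d * diagonal e)
      = S * T * (A + diagonal d * diagonal e) * (S * T) := by
        rw [normalized_eq_invSqrtDiagonal_mul, rowSum_eq, invSqrt_eq]
    _ = T * S * (A + diagonal d * diagonal e) * (S * T) := by rw [S_mul_T]
    _ = T * (S * A * S + S * diagonal d * (diagonal e * S)) * T := by noncomm_ring
    _ = T * (S * A * S + S * diagonal d * S * diagonal e) * T := by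
        rw [E_mul_S, ← mul_assoc (S * diagonal d)]
    _ = T * (normalized A + diagonal e) * T := by
        rw [S_mul_D_mul_S, one_mul, normalized_eq_invSqrtDiagonal_mul]

theorem one_sub_mul_add_mul_one_sub [Semiring R] [Ring M] [Module R M] {b x : M}
    (hbx : Commute b x) (a : M) :
    (1 - x) * (a + b) * (1 - x) =
      a - a * x - x * a + x * a * x + b - (2 : R) • (b * x) + x * b * x := by
  rw [two_smul]
  nth_rw 2 [hbx.eq]
  noncomm_ring

theorem normalized_add_diag_expansion_general {n : ℕ} {A E' : Matrix (Fin n) (Fin n) ℝ}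
    (hrow : ∀ i, 0 < ∑ j, A i j) {e : Fin n → ℝ} (he : ∀ i, -1 < e i)
    (hE' : E' = 1 - invSqrtDiagonal (1 + e)) :
    normalized (A + diagonal (fun i => ∑ j, A i j) * diagonal e) =
      normalized A - normalized A * E' - E' * normalized A + E' * normalized A * E'
        + diagonal e - (2 : ℝ) • (diagonal e * E') + E' * diagonal e * E' := by
  have invSqrt_eq : invSqrtDiagonal (1 + e) = 1 - E' := by rw [hE', sub_sub_cancel]
  have commute_E : Commute (diagonal e) E' :=
    hE' ▸ (Commute.one_right _).sub_right (commute_diagonal_invSqrtDiagonal _ _)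
  rw [normalized_add_diagonal_mul_diagonal hrow fun i => (he i).le, invSqrt_eq,
    one_sub_mul_add_mul_one_sub (R := ℝ) commute_E]

/-- Let `A` be real symmetric with nonnegative entries and positive row sums, `D` the
diagonal matrix of its row sums, `Ā = D⁻¹ᐟ² A D⁻¹ᐟ²`.  Let `E` be diagonal with
`0 ≤ E i i < 1` and `E' := I − (I + E)^{−1/2}`.  Then the normalized version of `A + DE`
equals `Ā − ĀE' − E'Ā + E'ĀE' + E − 2EE' + E'EE'`. -/
theorem normalized_add_diag_expansion {n : ℕ} (A : Matrix (Fin n) (Fin n) ℝ)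
    (hA : A.IsHermitian) (hnn : ∀ i j, 0 ≤ A i j) (hrow : ∀ i, 0 < ∑ j, A i j)
    (e : Fin n → ℝ) (he : ∀ i, 0 ≤ e i ∧ e i < 1) :
    normalized (A + Matrix.diagonal (fun i => ∑ j, A i j) * Matrix.diagonal e) =
      normalized A
        - normalized A * ((1 : Matrix (Fin n) (Fin n) ℝ) -
            Matrix.diagonal fun i => (1 + e i) ^ (-(1 : ℝ) / 2))
        - ((1 : Matrix (Fin n) (Fin n) ℝ) -
            Matrix.diagonal fun i => (1 + e i) ^ (-(1 : ℝ) / 2)) * normalized A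
        + ((1 : Matrix (Fin n) (Fin n) ℝ) -
            Matrix.diagonal fun i => (1 + e i) ^ (-(1 : ℝ) / 2)) * normalized A *
          ((1 : Matrix (Fin n) (Fin n) ℝ) -
            Matrix.diagonal fun i => (1 + e i) ^ (-(1 : ℝ) / 2))
        + Matrix.diagonal e
        - (2 : ℝ) • (Matrix.diagonal e * ((1 : Matrix (Fin n) (Fin n) ℝ) -
            Matrix.diagonal fun i => (1 + e i) ^ (-(1 : ℝ) / 2)))
        + ((1 : Matrix (Fin n) (Fin n) ℝ) -
            Matrix.diagonal fun i => (1 + e i) ^ (-(1 : ℝ) / 2)) * Matrix.diagonal e *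
          ((1 : Matrix (Fin n) (Fin n) ℝ) -
            Matrix.diagonal fun i => (1 + e i) ^ (-(1 : ℝ) / 2)) :=
  normalized_add_diag_expansion_general hrow (fun i => neg_one_lt_zero.trans_le (he i).1) rfl
end

section
/- Let A be the n×n adjacency matrix of a connected finite simple graph on n ≥ 2 vertices and let D be the diagonal matrix with D_ii = Σ_j A_ij. Let E be a diagonal n×n matrix with 0 ≤ E_ii ≤ ε for all i, where 0 < ε < 1. Then λ₂ of the normalized version of A + DE is at most λ₂ of the normalized version of A, plus 6ε; that is, λ₂((D')^{−1/2}(A + DE)(D')^{−1/2}) ≤ λ₂(D^{−1/2} A D^{−1/2}) + 6ε, where D' is the diagonal matrix of row sums of A + DE. -/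
/-!
Ordering eigenvalues by absolute value, `λ₂ M ≤ c` holds exactly when `‖M x‖ ≤ c ‖x‖` on some
hyperplane `v⊥` (Courant–Fischer for the second singular value): the orthogonal complement of a
top eigenvector is such a hyperplane, and conversely the plane spanned by two eigenvectors with
eigenvalues larger than `c` meets every `v⊥`. Two perturbation bounds in the operator norm follow
by exhibiting hyperplanes: `λ₂ (M + N) ≤ λ₂ M + ‖N‖`, with the same `v`, and
`λ₂ (F M Fᴴ) ≤ ‖F‖² λ₂ M`, with `F v` in place of `v`, since `x ⊥ F v` means `Fᴴ x ⊥ v`.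

Adding the loops multiplies the row sum `d i` by `1 + e i`, so the normalized version of `A + DE`
is `F N F + P`, where `N` is the normalized version of `A`, and `F = (1 + E)⁻¹ᐟ²` and
`P = E (1 + E)⁻¹` are diagonal matrices with `‖F‖ ≤ 1` and `‖P‖ ≤ ε`.
-/

open scoped Classical in
/-- `lambda2 M` is the second largest among the absolute values of the eigenvalues of the
real symmetric matrix `M`, counted with multiplicity (and `0` if `M` is not symmetric). -/
noncomputable def lambda2 {n : ℕ} (M : Matrix (Fin n) (Fin n) ℝ) : ℝ :=
  if h : M.IsHermitian then
    ((List.ofFn fun i => |h.eigenvalues i|).insertionSort (· ≥ ·)).getD 1 0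
  else 0

open Matrix Module
open scoped InnerProductSpace Matrix.Norms.L2Operator

section Diagonalizable

variable {𝕜 E ι : Type*} [RCLike 𝕜] [NormedAddCommGroup E] [InnerProductSpace 𝕜 E] [Fintype ι]
  {b : OrthonormalBasis ι 𝕜 E} {T : E →ₗ[𝕜] E} {μ : ι → 𝕜} {c : ℝ} {x : E}

lemma inner_map_eq_eigenvalue_mul_inner (hT : ∀ k, T (b k) = μ k • b k) (k : ι) (x : E) :
    ⟪b k, T x⟫_𝕜 = μ k * ⟪b k, x⟫_𝕜 := by
  classical
  conv_lhs => rw [← b.sum_repr' x]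
  simp [hT, inner_sum, inner_smul_right, b.inner_eq_ite, mul_comm]

lemma norm_map_sq_eq_sum_eigenvalue (hT : ∀ k, T (b k) = μ k • b k) (x : E) :
    ‖T x‖ ^ 2 = ∑ k, ‖μ k‖ ^ 2 * ‖⟪b k, x⟫_𝕜‖ ^ 2 := by
  simp only [← b.sum_sq_norm_inner_right, inner_map_eq_eigenvalue_mul_inner hT, norm_mul, mul_pow]

lemma norm_map_le_mul_norm_of_forall_eigenvalue_le (hT : ∀ k, T (b k) = μ k • b k) (hc : 0 ≤ c)
    (hx : ∀ k, ⟪b k, x⟫_𝕜 ≠ 0 → ‖μ k‖ ≤ c) : ‖T x‖ ≤ c * ‖x‖ := by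
  refine le_of_sq_le_sq ?_ (by positivity)
  rw [mul_pow, norm_map_sq_eq_sum_eigenvalue hT, ← b.sum_sq_norm_inner_right, Finset.mul_sum]
  refine Finset.sum_le_sum fun k _ => ?_
  obtain hk | hk := eq_or_ne ⟪b k, x⟫_𝕜 0
  · simp [hk]
  · grw [hx k hk]

lemma mul_norm_le_norm_map_of_forall_le_eigenvalue (hT : ∀ k, T (b k) = μ k • b k) (hc : 0 ≤ c)
    (hx : ∀ k, ⟪b k, x⟫_𝕜 ≠ 0 → c ≤ ‖μ k‖) : c * ‖x‖ ≤ ‖T x‖ := by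
  refine le_of_sq_le_sq ?_ (norm_nonneg _)
  rw [mul_pow, norm_map_sq_eq_sum_eigenvalue hT, ← b.sum_sq_norm_inner_right, Finset.mul_sum]
  refine Finset.sum_le_sum fun k _ => ?_
  obtain hk | hk := eq_or_ne ⟪b k, x⟫_𝕜 0
  · simp [hk]
  · grw [hx k hk]

end Diagonalizable

lemma finrank_span_pair_eq_two {K V ι : Type*} [DivisionRing K] [AddCommGroup V] [Module K V]
    {b : ι → V} (hb : LinearIndependent K b) {i j : ι} (hij : i ≠ j) :
    finrank K (Submodule.span K {b i, b j}) = 2 := by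
  have hpair : LinearIndependent K (b ∘ ![i, j]) :=
    hb.comp _ (by simpa [Function.Injective, Fin.forall_fin_two] using ⟨hij, hij.symm⟩)
  rw [← Fintype.card_fin 2, ← finrank_span_eq_card hpair, Set.range_comp, range_cons_cons_empty,
    Set.image_pair]

lemma exists_mem_ne_zero_inner_eq_zero {𝕜 E : Type*} [RCLike 𝕜] [NormedAddCommGroup E]
    [InnerProductSpace 𝕜 E] {W : Submodule 𝕜 E} (hW : 1 < finrank 𝕜 W) (v : E) :
    ∃ x ∈ W, x ≠ 0 ∧ ⟪v, x⟫_𝕜 = 0 := by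
  have : FiniteDimensional 𝕜 W := FiniteDimensional.of_finrank_pos (by lia)
  obtain ⟨x, hx, hx0⟩ := Submodule.exists_mem_ne_zero_of_ne_bot
    (LinearMap.ker_ne_bot_of_finrank_lt (f := (innerₛₗ 𝕜 v).domRestrict W) (by simpa using hW))
  exact ⟨x, x.2, by simpa using hx0, by simpa using hx⟩

section ToEuclideanLin

variable {𝕜 m n : Type*} [RCLike 𝕜] [Fintype m] [Fintype n] [DecidableEq n]

lemma norm_toEuclideanLin_le (M : Matrix m n 𝕜) (x : EuclideanSpace 𝕜 n) :
    ‖toEuclideanLin M x‖ ≤ ‖M‖ * ‖x‖ :=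
  l2_opNorm_mulVec M x

lemma toEuclideanLin_eigenvectorBasis {M : Matrix n n 𝕜} (hM : M.IsHermitian) (k : n) :
    toEuclideanLin M (hM.eigenvectorBasis k) = hM.eigenvalues k • hM.eigenvectorBasis k := by
  rw [toLpLin_apply, hM.mulVec_eigenvectorBasis]
  rfl

end ToEuclideanLin

lemma insertionSort_ofFn_eq_ofFn_comp {α : Type*} [LinearOrder α] {n : ℕ} {f : Fin n → α}
    {σ : Equiv.Perm (Fin n)} (hσ : Antitone (f ∘ σ)) :
    (List.ofFn f).insertionSort (· ≥ ·) = List.ofFn (f ∘ σ) :=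
  ((List.perm_insertionSort _ _).trans (σ.ofFn_comp_perm f).symm).eq_of_sortedGE
    List.sortedGE_insertionSort hσ.sortedGE_ofFn

section SecondEigenvalue

variable {m n : ℕ} {M N : Matrix (Fin n) (Fin n) ℝ} {c : ℝ}

lemma lambda2_eq_abs_eigenvalues (hn : 2 ≤ n) (hM : M.IsHermitian) {σ : Equiv.Perm (Fin n)}
    (hσ : Antitone fun k => |hM.eigenvalues (σ k)|) :
    lambda2 M = |hM.eigenvalues (σ ⟨1, hn⟩)| := by
  rw [lambda2, dif_pos hM, insertionSort_ofFn_eq_ofFn_comp hσ,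
    List.getD_eq_getElem _ _ (by rwa [List.length_ofFn]), List.getElem_ofFn]
  rfl

lemma lambda2_le_iff_exists_forall_ne (hn : 2 ≤ n) (hM : M.IsHermitian) :
    lambda2 M ≤ c ↔ ∃ i, ∀ k ≠ i, |hM.eigenvalues k| ≤ c := by
  set f : Fin n → ℝ := fun k => |hM.eigenvalues k|
  let σ : Equiv.Perm (Fin n) := Fin.revPerm.trans (Tuple.sort f)
  have hσ : Antitone (f ∘ σ) := (Tuple.monotone_sort f).comp_antitone Fin.rev_anti
  rw [lambda2_eq_abs_eigenvalues hn hM hσ]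
  constructor
  · refine fun h => ⟨σ ⟨0, by lia⟩, σ.surjective.forall.2 fun k hk => ?_⟩
    have hk0 : k.val ≠ 0 := fun h0 => hk (congrArg σ (Fin.ext h0))
    have hk1 : ⟨1, hn⟩ ≤ k := Fin.le_def.2 (Nat.one_le_iff_ne_zero.2 hk0)
    exact (hσ hk1).trans h
  · rintro ⟨i, hi⟩
    by_cases h : σ ⟨1, hn⟩ = i
    · exact (hσ (Fin.le_def.2 zero_le_one)).trans (hi (σ ⟨0, by lia⟩) (by simp [← h]))
    · exact hi _ h

lemma lambda2_nonneg (hn : 2 ≤ n) (hM : M.IsHermitian) : 0 ≤ lambda2 M := by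
  obtain ⟨i, hi⟩ := (lambda2_le_iff_exists_forall_ne hn hM).1 le_rfl
  have := Fin.nontrivial_iff_two_le.2 hn
  obtain ⟨k, hk⟩ := exists_ne i
  exact (abs_nonneg _).trans (hi k hk)

lemma lambda2_le_iff_exists_forall_orthogonal (hn : 2 ≤ n) (hM : M.IsHermitian) :
    lambda2 M ≤ c ↔ ∃ v, ∀ x, ⟪v, x⟫_ℝ = 0 → ‖toEuclideanLin M x‖ ≤ c * ‖x‖ := by
  have hT := toEuclideanLin_eigenvectorBasis hM
  set b := hM.eigenvectorBasis
  constructor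
  · intro h
    obtain ⟨i, hi⟩ := (lambda2_le_iff_exists_forall_ne hn hM).1 h
    have hc : 0 ≤ c := (lambda2_nonneg hn hM).trans h
    exact ⟨b i, fun x hx => norm_map_le_mul_norm_of_forall_eigenvalue_le hT hc fun k hk =>
      hi k fun hki => hk (hki ▸ hx)⟩
  · rintro ⟨v, hv⟩
    by_contra h
    simp only [lambda2_le_iff_exists_forall_ne hn hM, not_exists, not_forall, not_le] at h
    obtain ⟨i, -, hi⟩ := h ⟨0, by lia⟩
    obtain ⟨j, hji, hj⟩ := h i
    have hplane := finrank_span_pair_eq_two b.orthonormal.linearIndependent hji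
    obtain ⟨x, hxW, hx0, hvx⟩ := exists_mem_ne_zero_inner_eq_zero (hplane ▸ one_lt_two) v
    have hexpand : min |hM.eigenvalues j| |hM.eigenvalues i| * ‖x‖ ≤ ‖toEuclideanLin M x‖ := by
      refine mul_norm_le_norm_map_of_forall_le_eigenvalue hT (by positivity) fun k hk => ?_
      obtain ⟨r, s, rfl⟩ := Submodule.mem_span_pair.1 hxW
      obtain rfl | hkj := eq_or_ne k j
      · exact min_le_left _ _
      obtain rfl | hki := eq_or_ne k i
      · exact min_le_right _ _
      simp [inner_add_right, inner_smul_right, b.inner_eq_zero hkj, b.inner_eq_zero hki] at hk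
    exact ((hexpand.trans (hv x hvx)).trans_lt
      (mul_lt_mul_of_pos_right (lt_min hj hi) (norm_pos_iff.2 hx0))).false

lemma lambda2_add_le (hn : 2 ≤ n) (hM : M.IsHermitian) (hN : N.IsHermitian) :
    lambda2 (M + N) ≤ lambda2 M + ‖N‖ := by
  obtain ⟨v, hv⟩ := (lambda2_le_iff_exists_forall_orthogonal hn hM).1 le_rfl
  refine (lambda2_le_iff_exists_forall_orthogonal hn (hM.add hN)).2 ⟨v, fun x hx => ?_⟩
  calc ‖toEuclideanLin (M + N) x‖
      ≤ ‖toEuclideanLin M x‖ + ‖toEuclideanLin N x‖ := by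
        rw [map_add, LinearMap.add_apply]
        exact norm_add_le _ _
    _ ≤ lambda2 M * ‖x‖ + ‖N‖ * ‖x‖ := add_le_add (hv x hx) (norm_toEuclideanLin_le N x)
    _ = (lambda2 M + ‖N‖) * ‖x‖ := (add_mul _ _ _).symm

lemma lambda2_mul_mul_conjTranspose_le (hm : 2 ≤ m) (hn : 2 ≤ n) (hM : M.IsHermitian)
    (F : Matrix (Fin m) (Fin n) ℝ) : lambda2 (F * M * Fᴴ) ≤ ‖F‖ ^ 2 * lambda2 M := by
  obtain ⟨v, hv⟩ := (lambda2_le_iff_exists_forall_orthogonal hn hM).1 le_rfl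
  refine (lambda2_le_iff_exists_forall_orthogonal hm (isHermitian_mul_mul_conjTranspose F hM)).2
    ⟨toEuclideanLin F v, fun x hx => ?_⟩
  rw [← LinearMap.adjoint_inner_right, ← toEuclideanLin_conjTranspose_eq_adjoint] at hx
  have h0 := lambda2_nonneg hn hM
  calc ‖toEuclideanLin (F * M * Fᴴ) x‖
      = ‖toEuclideanLin F (toEuclideanLin M (toEuclideanLin Fᴴ x))‖ := by
        simp [toLpLin_mul_same]
    _ ≤ ‖F‖ * (lambda2 M * (‖Fᴴ‖ * ‖x‖)) := by
        grw [norm_toEuclideanLin_le F, hv _ hx, norm_toEuclideanLin_le Fᴴ x]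
    _ = ‖F‖ ^ 2 * lambda2 M * ‖x‖ := by
        rw [l2_opNorm_conjTranspose]
        ring

end SecondEigenvalue

section Normalized

variable {n : ℕ} {A : Matrix (Fin n) (Fin n) ℝ}

lemma isHermitian_normalized (hA : A.IsHermitian) : (normalized A).IsHermitian := by
  simpa [normalized] using isHermitian_mul_mul_conjTranspose
    (diagonal fun i => (∑ j, A i j) ^ (-(1 : ℝ) / 2)) hA

lemma rpow_neg_half_mul_self {x : ℝ} (hx : 0 < x) :
    x ^ (-(1 : ℝ) / 2) * x ^ (-(1 : ℝ) / 2) = x⁻¹ := by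
  rw [← Real.rpow_add hx, ← Real.rpow_neg_one]
  norm_num

lemma normalized_add_self_loops {e : Fin n → ℝ} (hA : ∀ i, 0 < ∑ j, A i j)
    (he : ∀ i, -1 < e i) :
    normalized (A + diagonal (fun i => ∑ j, A i j) * diagonal e) =
      diagonal (fun i => (1 + e i) ^ (-(1 : ℝ) / 2)) * normalized A *
          (diagonal fun i => (1 + e i) ^ (-(1 : ℝ) / 2))ᴴ +
        diagonal (fun i => e i / (1 + e i)) := by
  have hpos (i : Fin n) : 0 < 1 + e i := by linarith [he i]
  have hrow (i : Fin n) : ∑ j, (A + diagonal (fun i => ∑ j, A i j) * diagonal e) i j =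
      (∑ j, A i j) * (1 + e i) := by
    simp [diagonal_mul_diagonal, Finset.sum_add_distrib, diagonal_apply, mul_add]
  have hscale (i : Fin n) : ((∑ j, A i j) * (1 + e i)) ^ (-(1 : ℝ) / 2) =
      (∑ j, A i j) ^ (-(1 : ℝ) / 2) * (1 + e i) ^ (-(1 : ℝ) / 2) :=
    Real.mul_rpow (hA i).le (hpos i).le
  have hloop (i : Fin n) : ((∑ j, A i j) * (1 + e i)) ^ (-(1 : ℝ) / 2) *
      ((∑ j, A i j) * e i) * ((∑ j, A i j) * (1 + e i)) ^ (-(1 : ℝ) / 2) = e i / (1 + e i) := by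
    rw [mul_right_comm, rpow_neg_half_mul_self (mul_pos (hA i) (hpos i))]
    have := (hA i).ne'
    field_simp
  simp only [normalized, hrow]
  rw [mul_add, add_mul, diagonal_mul_diagonal, diagonal_mul_diagonal, diagonal_mul_diagonal]
  simp only [hloop]
  congr 1
  ext i j
  simp only [diagonal_conjTranspose, star_trivial, diagonal_mul, mul_diagonal, hscale]
  ring

end Normalized

section DiagonalNorm

variable {ι : Type*} [Fintype ι] [DecidableEq ι] {e : ι → ℝ}

lemma norm_diagonal_one_add_rpow_le_one (he : ∀ i, 0 ≤ e i) :
    ‖diagonal fun i => (1 + e i) ^ (-(1 : ℝ) / 2)‖ ≤ 1 := by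
  rw [l2_opNorm_diagonal, pi_norm_le_iff_of_nonneg zero_le_one]
  intro i
  have := he i
  rw [Real.norm_of_nonneg (by positivity)]
  exact Real.rpow_le_one_of_one_le_of_nonpos (by linarith) (by norm_num)

lemma norm_diagonal_div_one_add_le [Nonempty ι] {ε : ℝ} (he : ∀ i, 0 ≤ e i ∧ e i ≤ ε) :
    ‖diagonal fun i => e i / (1 + e i)‖ ≤ ε := by
  rw [l2_opNorm_diagonal, pi_norm_le_iff_of_nonempty]
  intro i
  obtain ⟨h0, hε⟩ := he i
  rw [Real.norm_of_nonneg (by positivity)]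
  exact (div_le_self h0 (by linarith)).trans hε

end DiagonalNorm

theorem lambda2_normalized_add_self_loops_le_general {n : ℕ} (hn : 2 ≤ n)
    {A : Matrix (Fin n) (Fin n) ℝ} (hA : A.IsHermitian) (hrow : ∀ i, 0 < ∑ j, A i j)
    {ε : ℝ} {e : Fin n → ℝ} (he : ∀ i, 0 ≤ e i ∧ e i ≤ ε) :
    lambda2 (normalized (A + diagonal (fun i => ∑ j, A i j) * diagonal e)) ≤
      lambda2 (normalized A) + ε := by
  have hN := isHermitian_normalized hA
  set f : Fin n → ℝ := fun i => (1 + e i) ^ (-(1 : ℝ) / 2)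
  set p : Fin n → ℝ := fun i => e i / (1 + e i)
  have : Nonempty (Fin n) := ⟨⟨0, by lia⟩⟩
  have hf : ‖diagonal f‖ ≤ 1 := norm_diagonal_one_add_rpow_le_one fun i => (he i).1
  have hp : ‖diagonal p‖ ≤ ε := norm_diagonal_div_one_add_le he
  calc lambda2 (normalized (A + diagonal (fun i => ∑ j, A i j) * diagonal e))
      = lambda2 (diagonal f * normalized A * (diagonal f)ᴴ + diagonal p) := by
        rw [normalized_add_self_loops hrow fun i => by linarith [(he i).1]]
    _ ≤ lambda2 (diagonal f * normalized A * (diagonal f)ᴴ) + ‖diagonal p‖ :=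
        lambda2_add_le hn (isHermitian_mul_mul_conjTranspose _ hN) (isHermitian_diagonal p)
    _ ≤ ‖diagonal f‖ ^ 2 * lambda2 (normalized A) + ‖diagonal p‖ := by
        grw [lambda2_mul_mul_conjTranspose_le hn hn hN]
    _ ≤ lambda2 (normalized A) + ε := by
        grw [pow_le_one₀ (norm_nonneg _) hf, hp, one_mul]
        exact lambda2_nonneg hn hN

/-- Eigenvalue-shift lemma: for a connected simple graph on `n ≥ 2` vertices with adjacency
matrix `A` and degree diagonal `D`, and a diagonal matrix `E` with `0 ≤ E i i ≤ ε` for some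
`0 < ε < 1`, we have `λ₂` of the normalized version of `A + DE` is at most `λ₂` of the
normalized version of `A`, plus `6ε`. -/
theorem lambda2_normalized_add_self_loops_le {n : ℕ} (hn : 2 ≤ n)
    (G : SimpleGraph (Fin n)) [DecidableRel G.Adj] (hconn : G.Connected)
    (ε : ℝ) (hε0 : 0 < ε) (hε1 : ε < 1)
    (e : Fin n → ℝ) (he : ∀ i, 0 ≤ e i ∧ e i ≤ ε) :
    lambda2 (normalized (G.adjMatrix ℝ +
        Matrix.diagonal (fun i => ∑ j, G.adjMatrix ℝ i j) * Matrix.diagonal e)) ≤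
      lambda2 (normalized (G.adjMatrix ℝ)) + 6 * ε := by
  have := Fin.nontrivial_iff_two_le.2 hn
  have hrow (i : Fin n) : 0 < ∑ j, G.adjMatrix ℝ i j := by
    simp only [SimpleGraph.adjMatrix_apply, ← SimpleGraph.degree_eq_sum_if_adj, Nat.cast_pos]
    exact hconn.preconnected.degree_pos_of_nontrivial i
  have hle := lambda2_normalized_add_self_loops_le_general hn
    (isHermitian_iff_isSymm.2 G.isSymm_adjMatrix) hrow he
  linarith
end
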